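/- arXiv:1303.0849 — 5 statements merged into one kernel-verified Lean document; each statement's English description precedes it below -/
import Mathlib

section
/- Let ρ0 > 0 and a1, a2 be nonzero real numbers, and set L1 = (π/4)·a1·ρ0², L2 = (π/4)·a2·ρ0², c3 = ρ0²/2. Suppose real numbers c1, c2 and α satisfy c2·c3 = −2L1·L2/π², 4c1² = α² − (L1/L2)·c2, and α² = 4c1² + 4c1·c3 + c3² + (L2/L1)·c2. Then c2 = −(1/4)·a1·a2·ρ0², c1 = −(1/8)(ρ0² + a1² − a2²), and α² = (1/16)(ρ0² − a1² − a2²)² − (1/4)·a1²·a2². -/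
open Real

/-!
In the scaled angular momenta `m = L₁ / (π c₃)` and `n = L₂ / (π c₃)` every quotient of the system
disappears: the first constraint gives `c₂ = -2 m n c₃`, and the other two become
`α² = (2 c₁)² - 2 m² c₃` and `α² = (2 c₁ + c₃)² - 2 n² c₃`. Their difference is linear in `c₁`.
The Myers-Perry rotation parameters are `a₁ = 2 m` and `a₂ = 2 n`.
-/

/-- The constraints that minor-divisibility and the unit-determinant condition impose on the
coefficients `c₁`, `c₂`, `c₃` and the nut position `α` of a two-nut reconstruction with angular
momenta `L₁`, `L₂`. The constant `κ` stands for `π`. -/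
structure TwoNutConstraints {K : Type*} [Field K] (κ L₁ L₂ c₁ c₂ c₃ α : K) : Prop where
  c₂_mul_c₃ : c₂ * c₃ = -(2 * L₁ * L₂) / κ ^ 2
  four_mul_c₁_sq : 4 * c₁ ^ 2 = α ^ 2 - (L₁ / L₂) * c₂
  α_sq : α ^ 2 = 4 * c₁ ^ 2 + 4 * c₁ * c₃ + c₃ ^ 2 + (L₂ / L₁) * c₂

namespace TwoNutConstraints

variable {K : Type*} [Field K] {κ m n c₁ c₂ c₃ α : K}

theorem c₂_eq (h : TwoNutConstraints κ (κ * m * c₃) (κ * n * c₃) c₁ c₂ c₃ α)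
    (hκ : κ ≠ 0) (hc₃ : c₃ ≠ 0) : c₂ = -2 * m * n * c₃ := by
  apply mul_right_cancel₀ hc₃
  rw [h.c₂_mul_c₃]
  field_simp

theorem α_sq_eq_two_mul_c₁_sq_sub
    (h : TwoNutConstraints κ (κ * m * c₃) (κ * n * c₃) c₁ c₂ c₃ α)
    (hκ : κ ≠ 0) (hc₃ : c₃ ≠ 0) (hn : n ≠ 0) :
    α ^ 2 = (2 * c₁) ^ 2 - 2 * m ^ 2 * c₃ := by
  have ratio_mul_c₂ : κ * m * c₃ / (κ * n * c₃) * c₂ = -2 * m ^ 2 * c₃ := by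
    rw [h.c₂_eq hκ hc₃]
    field_simp
  linear_combination ratio_mul_c₂ - h.four_mul_c₁_sq

theorem α_sq_eq_two_mul_c₁_add_c₃_sq_sub
    (h : TwoNutConstraints κ (κ * m * c₃) (κ * n * c₃) c₁ c₂ c₃ α)
    (hκ : κ ≠ 0) (hc₃ : c₃ ≠ 0) (hm : m ≠ 0) :
    α ^ 2 = (2 * c₁ + c₃) ^ 2 - 2 * n ^ 2 * c₃ := by
  have ratio_mul_c₂ : κ * n * c₃ / (κ * m * c₃) * c₂ = -2 * n ^ 2 * c₃ := by
    rw [h.c₂_eq hκ hc₃]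
    field_simp
  linear_combination ratio_mul_c₂ + h.α_sq

theorem four_mul_c₁_eq (h : TwoNutConstraints κ (κ * m * c₃) (κ * n * c₃) c₁ c₂ c₃ α)
    (hκ : κ ≠ 0) (hc₃ : c₃ ≠ 0) (hm : m ≠ 0) (hn : n ≠ 0) :
    4 * c₁ = -(c₃ + 2 * m ^ 2 - 2 * n ^ 2) := by
  apply mul_right_cancel₀ hc₃
  linear_combination
    h.α_sq_eq_two_mul_c₁_sq_sub hκ hc₃ hn - h.α_sq_eq_two_mul_c₁_add_c₃_sq_sub hκ hc₃ hm

theorem four_mul_α_sq_eq (h : TwoNutConstraints κ (κ * m * c₃) (κ * n * c₃) c₁ c₂ c₃ α)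
    (hκ : κ ≠ 0) (hc₃ : c₃ ≠ 0) (hm : m ≠ 0) (hn : n ≠ 0) :
    4 * α ^ 2 = (c₃ - 2 * m ^ 2 - 2 * n ^ 2) ^ 2 - 16 * m ^ 2 * n ^ 2 :=
  calc
    4 * α ^ 2 = (4 * c₁) ^ 2 - 8 * m ^ 2 * c₃ := by
      rw [h.α_sq_eq_two_mul_c₁_sq_sub hκ hc₃ hn]
      ring
    _ = (c₃ - 2 * m ^ 2 - 2 * n ^ 2) ^ 2 - 16 * m ^ 2 * n ^ 2 := by
      rw [h.four_mul_c₁_eq hκ hc₃ hm hn]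
      ring

end TwoNutConstraints

/-- Resolution of the two-nut reconstruction in Myers-Perry parameters. -/
theorem stmt_5 (ρ0 a1 a2 : ℝ) (hρ0 : 0 < ρ0) (ha1 : a1 ≠ 0) (ha2 : a2 ≠ 0)
    (L1 L2 c3 : ℝ)
    (hL1 : L1 = (π / 4) * a1 * ρ0 ^ 2) (hL2 : L2 = (π / 4) * a2 * ρ0 ^ 2)
    (hc3 : c3 = ρ0 ^ 2 / 2)
    (c1 c2 α : ℝ)
    (h1 : c2 * c3 = -(2 * L1 * L2) / π ^ 2)
    (h2 : 4 * c1 ^ 2 = α ^ 2 - (L1 / L2) * c2)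
    (h3 : α ^ 2 = 4 * c1 ^ 2 + 4 * c1 * c3 + c3 ^ 2 + (L2 / L1) * c2) :
    c2 = -(1 / 4) * a1 * a2 * ρ0 ^ 2 ∧
      c1 = -(1 / 8) * (ρ0 ^ 2 + a1 ^ 2 - a2 ^ 2) ∧
      α ^ 2 = (1 / 16) * (ρ0 ^ 2 - a1 ^ 2 - a2 ^ 2) ^ 2 - (1 / 4) * a1 ^ 2 * a2 ^ 2 := by
  have hc3_ne : c3 ≠ 0 := by rw [hc3]; positivity
  have hL1_scaled : L1 = π * (a1 / 2) * c3 := by rw [hL1, hc3]; ring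
  have hL2_scaled : L2 = π * (a2 / 2) * c3 := by rw [hL2, hc3]; ring
  have hm : a1 / 2 ≠ 0 := div_ne_zero ha1 two_ne_zero
  have hn : a2 / 2 ≠ 0 := div_ne_zero ha2 two_ne_zero
  have h : TwoNutConstraints π L1 L2 c1 c2 c3 α := ⟨h1, h2, h3⟩
  rw [hL1_scaled, hL2_scaled] at h
  have hc2_eq := h.c₂_eq pi_ne_zero hc3_ne
  have hc1_eq := h.four_mul_c₁_eq pi_ne_zero hc3_ne hm hn
  have hα_eq := h.four_mul_α_sq_eq pi_ne_zero hc3_ne hm hn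
  rw [hc3] at hc2_eq hc1_eq hα_eq
  refine ⟨?_, ?_, ?_⟩
  · linear_combination hc2_eq
  · linear_combination (1 / 4) * hc1_eq
  · linear_combination (1 / 4) * hα_eq
end

section
/- Let ρ0, a1, a2 be real numbers, set β = (1/4)(−ρ0² + a1² − a2²), γ = (1/4)(ρ0² + a1² − a2²), and let α be a real number with α² = (1/16)(ρ0² − a1² − a2²)² − (1/4)·a1²·a2². Define the symmetric 3×3 matrix P₁(z) by P₁₁ = −(z+γ)/(2(z²−α²)), P₁₂ = −ρ0²·a1/(4(z²−α²)), P₁₃ = ρ0²·a1·a2/(4(z²−α²)), P₂₂ = −(z² + z(β−γ) + γ² − βγ − α²)/(z²−α²), P₂₃ = −a2·ρ0²·(z−γ)/(2(z²−α²)), P₃₃ = 2(z−β) + a2²·ρ0²·(z−γ)/(2(z²−α²)). Then det P₁(z) = 1 for every real z with z² ≠ α². -/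
/-!
Adding `a₂` times the second row of the patching matrix to the third leaves `(0, -a₂, 2 (z - β))`,
so a congruence by a transvection makes the matrix tridiagonal. The rod parameters satisfy
`γ - β = ρ₀² / 2`, `γ² - α² = (ρ₀ a₁ / 2)²` and `β² - α² = (ρ₀ a₂ / 2)²`. The first two reduce the
leading `2 × 2` minor to `(z + β) / (2 (z² - α²))`, cancelling one factor `z² - α²`; with the first
and the third, the numerator of the determinant becomes `z² - β² + (ρ₀ a₂ / 2)² = z² - α²`.
-/

namespace MyersPerry

open Matrix

theorem det_tridiagonal_fin_three {R : Type*} [CommRing R] (p q r s t : R) :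
    det !![p, q, 0; q, s, r; 0, r, t] = (p * s - q ^ 2) * t - p * r ^ 2 := by
  rw [det_fin_three]
  simp only [of_apply, cons_val', cons_val_zero, cons_val_one, cons_val, cons_val_fin_one]
  ring

theorem det_transvection_mul_mul_transvection {n R : Type*} [Fintype n] [DecidableEq n]
    [CommRing R] {i j k l : n} (hij : i ≠ j) (hkl : k ≠ l) (c d : R) (M : Matrix n n R) :
    (transvection i j c * M * transvection k l d).det = M.det := by
  rw [det_mul, det_mul, det_transvection_of_ne i j hij, det_transvection_of_ne k l hkl,
    one_mul, mul_one]

theorem transvection_two_one {R : Type*} [CommRing R] (c : R) :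
    transvection (2 : Fin 3) 1 c = !![1, 0, 0; 0, 1, 0; 0, c, 1] := by
  ext i j
  fin_cases i <;> fin_cases j <;> simp [transvection]

theorem transvection_one_two {R : Type*} [CommRing R] (c : R) :
    transvection (1 : Fin 3) 2 c = !![1, 0, 0; 0, 1, c; 0, 0, 1] := by
  ext i j
  fin_cases i <;> fin_cases j <;> simp [transvection]

theorem transvection_mul_tridiagonal_mul_transvection {R : Type*} [CommRing R] (p q r s t c : R) :
    transvection 2 1 c * !![p, q, 0; q, s, r; 0, r, t] * transvection 1 2 c =
      !![p, q, c * q; q, s, r + c * s; c * q, r + c * s, t + 2 * c * r + c ^ 2 * s] := by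
  rw [transvection_two_one, transvection_one_two, mul_fin_three, mul_fin_three]
  simp only [mul_zero, zero_mul, mul_one, one_mul, add_zero, zero_add]
  ring_nf

variable {K : Type*} [Field K]

/-- The patching matrix of the five-dimensional Myers-Perry black hole adapted to the top rod
`(α, ∞)`, with the rod parameters `β`, `γ`, `α` kept independent of `ρ0`, `a1`, `a2`. The entries
lie in any field, so that `z` may be the complex spectral parameter. -/
def patchingMatrix (ρ0 a1 a2 β γ α z : K) : Matrix (Fin 3) (Fin 3) K :=
  !![-(z + γ) / (2 * (z ^ 2 - α ^ 2)),
      -(ρ0 ^ 2 * a1) / (4 * (z ^ 2 - α ^ 2)),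
      ρ0 ^ 2 * a1 * a2 / (4 * (z ^ 2 - α ^ 2));
      -(ρ0 ^ 2 * a1) / (4 * (z ^ 2 - α ^ 2)),
      -(z ^ 2 + z * (β - γ) + γ ^ 2 - β * γ - α ^ 2) / (z ^ 2 - α ^ 2),
      -(a2 * ρ0 ^ 2 * (z - γ)) / (2 * (z ^ 2 - α ^ 2));
      ρ0 ^ 2 * a1 * a2 / (4 * (z ^ 2 - α ^ 2)),
      -(a2 * ρ0 ^ 2 * (z - γ)) / (2 * (z ^ 2 - α ^ 2)),
      2 * (z - β) + a2 ^ 2 * ρ0 ^ 2 * (z - γ) / (2 * (z ^ 2 - α ^ 2))]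

/-- The tridiagonal matrix congruent to `patchingMatrix`, obtained by adding `a2` times the second
row and column to the third; its middle entry is simplified by `γ - β = ρ0 ^ 2 / 2`. -/
def reducedPatchingMatrix (ρ0 a1 a2 β γ α z : K) : Matrix (Fin 3) (Fin 3) K :=
  !![-(z + γ) / (2 * (z ^ 2 - α ^ 2)), -(ρ0 ^ 2 * a1) / (4 * (z ^ 2 - α ^ 2)), 0;
      -(ρ0 ^ 2 * a1) / (4 * (z ^ 2 - α ^ 2)), ρ0 ^ 2 * (z - γ) / (2 * (z ^ 2 - α ^ 2)) - 1, -a2;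
      0, -a2, 2 * (z - β) - a2 ^ 2]

variable {ρ0 a1 a2 β γ α z : K}

theorem patchingMatrix_eq_transvection_mul_mul (hγβ : γ - β = ρ0 ^ 2 / 2)
    (hz : z ^ 2 - α ^ 2 ≠ 0) :
    patchingMatrix ρ0 a1 a2 β γ α z =
      transvection 2 1 (-a2) * reducedPatchingMatrix ρ0 a1 a2 β γ α z *
        transvection 1 2 (-a2) := by
  have entry₁₃ : ρ0 ^ 2 * a1 * a2 / (4 * (z ^ 2 - α ^ 2)) =
      -a2 * (-(ρ0 ^ 2 * a1) / (4 * (z ^ 2 - α ^ 2))) := by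
    ring
  have entry₂₂ : -(z ^ 2 + z * (β - γ) + γ ^ 2 - β * γ - α ^ 2) / (z ^ 2 - α ^ 2) =
      ρ0 ^ 2 * (z - γ) / (2 * (z ^ 2 - α ^ 2)) - 1 := by
    calc
      _ = (γ - β) * (z - γ) / (z ^ 2 - α ^ 2) - 1 := by
        field_simp
        ring
      _ = ρ0 ^ 2 * (z - γ) / (2 * (z ^ 2 - α ^ 2)) - 1 := by
        rw [hγβ, div_mul_eq_mul_div, div_div]
  have entry₂₃ : -(a2 * ρ0 ^ 2 * (z - γ)) / (2 * (z ^ 2 - α ^ 2)) =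
      -a2 + -a2 * (ρ0 ^ 2 * (z - γ) / (2 * (z ^ 2 - α ^ 2)) - 1) := by
    ring
  have entry₃₃ : 2 * (z - β) + a2 ^ 2 * ρ0 ^ 2 * (z - γ) / (2 * (z ^ 2 - α ^ 2)) =
      2 * (z - β) - a2 ^ 2 + 2 * -a2 * -a2 +
        (-a2) ^ 2 * (ρ0 ^ 2 * (z - γ) / (2 * (z ^ 2 - α ^ 2)) - 1) := by
    ring
  rw [patchingMatrix, entry₁₃, entry₂₂, entry₂₃, entry₃₃, reducedPatchingMatrix,
    transvection_mul_tridiagonal_mul_transvection]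

theorem reducedPatchingMatrix_leading_minor [NeZero (2 : K)] (hγβ : γ - β = ρ0 ^ 2 / 2)
    (hγα : γ ^ 2 - α ^ 2 = (ρ0 * a1 / 2) ^ 2) (hz : z ^ 2 - α ^ 2 ≠ 0) :
    -(z + γ) / (2 * (z ^ 2 - α ^ 2)) * (ρ0 ^ 2 * (z - γ) / (2 * (z ^ 2 - α ^ 2)) - 1) -
        (-(ρ0 ^ 2 * a1) / (4 * (z ^ 2 - α ^ 2))) ^ 2 =
      (z + β) / (2 * (z ^ 2 - α ^ 2)) := by
  have four_eq : (4 : K) = 2 ^ 2 := by norm_num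
  calc
    _ = (z + γ) / (2 * (z ^ 2 - α ^ 2)) -
        ρ0 ^ 2 * (z ^ 2 - γ ^ 2 + (ρ0 * a1 / 2) ^ 2) / (2 * (z ^ 2 - α ^ 2)) ^ 2 := by
      rw [four_eq]
      field_simp
      ring
    _ = (z + γ - ρ0 ^ 2 / 2) / (2 * (z ^ 2 - α ^ 2)) := by
      rw [← hγα, sub_add_sub_cancel]
      field_simp
    _ = (z + β) / (2 * (z ^ 2 - α ^ 2)) := by
      rw [← hγβ, add_sub_assoc, sub_sub_cancel]

theorem det_patchingMatrix [NeZero (2 : K)] (hγβ : γ - β = ρ0 ^ 2 / 2)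
    (hγα : γ ^ 2 - α ^ 2 = (ρ0 * a1 / 2) ^ 2) (hβα : β ^ 2 - α ^ 2 = (ρ0 * a2 / 2) ^ 2)
    (hz : z ^ 2 - α ^ 2 ≠ 0) :
    (patchingMatrix ρ0 a1 a2 β γ α z).det = 1 := by
  rw [patchingMatrix_eq_transvection_mul_mul hγβ hz,
    det_transvection_mul_mul_transvection (by decide) (by decide), reducedPatchingMatrix,
    det_tridiagonal_fin_three, reducedPatchingMatrix_leading_minor hγβ hγα hz]
  calc
    _ = (z ^ 2 - β ^ 2 + a2 ^ 2 * (γ - β) / 2) / (z ^ 2 - α ^ 2) := by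
      field_simp
      ring
    _ = (z ^ 2 - β ^ 2 + (ρ0 * a2 / 2) ^ 2) / (z ^ 2 - α ^ 2) := by
      rw [hγβ]
      ring
    _ = 1 := by
      rw [← hβα, sub_add_sub_cancel, div_self hz]

theorem gamma_sub_beta [NeZero (2 : K)]
    (hβ : β = (1 / 4) * (-ρ0 ^ 2 + a1 ^ 2 - a2 ^ 2))
    (hγ : γ = (1 / 4) * (ρ0 ^ 2 + a1 ^ 2 - a2 ^ 2)) : γ - β = ρ0 ^ 2 / 2 := by
  have four_eq : (4 : K) = 2 ^ 2 := by norm_num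
  rw [hβ, hγ, four_eq]
  field_simp
  ring

theorem gamma_sq_sub_alpha_sq [NeZero (2 : K)]
    (hγ : γ = (1 / 4) * (ρ0 ^ 2 + a1 ^ 2 - a2 ^ 2))
    (hα : α ^ 2 = (1 / 16) * (ρ0 ^ 2 - a1 ^ 2 - a2 ^ 2) ^ 2 - (1 / 4) * a1 ^ 2 * a2 ^ 2) :
    γ ^ 2 - α ^ 2 = (ρ0 * a1 / 2) ^ 2 := by
  have four_eq : (4 : K) = 2 ^ 2 := by norm_num
  have sixteen_eq : (16 : K) = 2 ^ 4 := by norm_num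
  rw [hγ, hα, four_eq, sixteen_eq]
  field_simp
  ring

theorem beta_sq_sub_alpha_sq [NeZero (2 : K)]
    (hβ : β = (1 / 4) * (-ρ0 ^ 2 + a1 ^ 2 - a2 ^ 2))
    (hα : α ^ 2 = (1 / 16) * (ρ0 ^ 2 - a1 ^ 2 - a2 ^ 2) ^ 2 - (1 / 4) * a1 ^ 2 * a2 ^ 2) :
    β ^ 2 - α ^ 2 = (ρ0 * a2 / 2) ^ 2 := by
  -- Exchanging `a1` and `a2` fixes `α ^ 2` and turns `γ` into `-β`.
  have hγ_swap : -β = (1 / 4) * (ρ0 ^ 2 + a2 ^ 2 - a1 ^ 2) := by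
    rw [hβ]
    ring
  have hα_swap : α ^ 2 =
      (1 / 16) * (ρ0 ^ 2 - a2 ^ 2 - a1 ^ 2) ^ 2 - (1 / 4) * a2 ^ 2 * a1 ^ 2 := by
    rw [hα]
    ring
  rw [← neg_sq β]
  exact gamma_sq_sub_alpha_sq hγ_swap hα_swap

end MyersPerry

theorem stmt_6_general {K : Type*} [Field K] [NeZero (2 : K)] (ρ0 a1 a2 β γ α : K)
    (hβ : β = (1 / 4) * (-ρ0 ^ 2 + a1 ^ 2 - a2 ^ 2))
    (hγ : γ = (1 / 4) * (ρ0 ^ 2 + a1 ^ 2 - a2 ^ 2))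
    (hα : α ^ 2 = (1 / 16) * (ρ0 ^ 2 - a1 ^ 2 - a2 ^ 2) ^ 2 - (1 / 4) * a1 ^ 2 * a2 ^ 2)
    (z : K) (hz : z ^ 2 ≠ α ^ 2) :
    (MyersPerry.patchingMatrix ρ0 a1 a2 β γ α z).det = 1 :=
  MyersPerry.det_patchingMatrix (MyersPerry.gamma_sub_beta hβ hγ)
    (MyersPerry.gamma_sq_sub_alpha_sq hγ hα) (MyersPerry.beta_sq_sub_alpha_sq hβ hα)
    (sub_ne_zero.mpr hz)

/-- The Myers-Perry patching matrix adapted to the top axis rod has unit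
determinant. -/
theorem stmt_6 (ρ0 a1 a2 β γ α : ℝ)
    (hβ : β = (1 / 4) * (-ρ0 ^ 2 + a1 ^ 2 - a2 ^ 2))
    (hγ : γ = (1 / 4) * (ρ0 ^ 2 + a1 ^ 2 - a2 ^ 2))
    (hα : α ^ 2 = (1 / 16) * (ρ0 ^ 2 - a1 ^ 2 - a2 ^ 2) ^ 2 - (1 / 4) * a1 ^ 2 * a2 ^ 2) :
    ∀ z : ℝ, z ^ 2 ≠ α ^ 2 →
      (!![-(z + γ) / (2 * (z ^ 2 - α ^ 2)),
          -(ρ0 ^ 2 * a1) / (4 * (z ^ 2 - α ^ 2)),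
          ρ0 ^ 2 * a1 * a2 / (4 * (z ^ 2 - α ^ 2));
          -(ρ0 ^ 2 * a1) / (4 * (z ^ 2 - α ^ 2)),
          -(z ^ 2 + z * (β - γ) + γ ^ 2 - β * γ - α ^ 2) / (z ^ 2 - α ^ 2),
          -(a2 * ρ0 ^ 2 * (z - γ)) / (2 * (z ^ 2 - α ^ 2));
          ρ0 ^ 2 * a1 * a2 / (4 * (z ^ 2 - α ^ 2)),
          -(a2 * ρ0 ^ 2 * (z - γ)) / (2 * (z ^ 2 - α ^ 2)),
          2 * (z - β) + a2 ^ 2 * ρ0 ^ 2 * (z - γ) / (2 * (z ^ 2 - α ^ 2))] :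
        Matrix (Fin 3) (Fin 3) ℝ).det = 1 := by
  exact stmt_6_general ρ0 a1 a2 β γ α hβ hγ hα
end

section
/- Let α, β, λ, ν be real numbers satisfying 2ν² = (λ + α)(λ − α)(λ + β), and set γ = β + λ and δ = −α² + βλ + λ². Define the symmetric 3×3 matrix P₁(z) with entries P₁₁ = −(z+λ)/(2(z+α)(z−β)), P₁₂ = ν/((z+α)(z−β)), P₁₃ = 0, P₂₂ = −(z² − γz + δ)/((z+α)(z−β)), P₂₃ = 0, P₃₃ = 2(z+α)(z−β)/(z−α). Then det P₁(z) = 1 for every real z with z ∉ {α, −α, β}. -/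
/-!
Let `D = (z + α) * (z - β)`. The cubic `(z - α) * D` takes the value
`-(lam + α) * (lam - α) * (lam + β) = -2 * ν ^ 2` at `z = -lam`, so `z + lam` divides
`(z - α) * D + 2 * ν ^ 2`; the quotient is `z ^ 2 - γ * z + δ`. Hence the upper left block of the
patching matrix has determinant `(z - α) / (2 * D)`, the inverse of the last diagonal entry.
-/

theorem det_fin_three_of_blockTriangular {R : Type*} [CommRing R] (a b c d x y e : R) :
    (!![a, b, x; c, d, y; 0, 0, e] : Matrix (Fin 3) (Fin 3) R).det =
      (!![a, b; c, d] : Matrix (Fin 2) (Fin 2) R).det * e := by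
  simp [Matrix.det_fin_three, Matrix.det_fin_two_of, sub_mul]

theorem add_mul_quotient_sub_eq_cubic {R : Type*} [CommRing R] (α β lam z : R) :
    (z + lam) * (z ^ 2 - (β + lam) * z + (-α ^ 2 + β * lam + lam ^ 2)) -
        (lam + α) * (lam - α) * (lam + β) =
      (z - α) * ((z + α) * (z - β)) := by
  ring

section Field

variable {K : Type*} [Field K] [NeZero (2 : K)]

theorem det_symm_div_of_mul_sub_eq_mul {p q n r D : K} (hD : D ≠ 0)
    (h : p * q - 2 * n ^ 2 = r * D) :
    (!![-p / (2 * D), n / D; n / D, -q / D] : Matrix (Fin 2) (Fin 2) K).det = r / (2 * D) := by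
  calc (!![-p / (2 * D), n / D; n / D, -q / D] : Matrix (Fin 2) (Fin 2) K).det
      = (p * q - 2 * n ^ 2) / (2 * D * D) := by
        rw [Matrix.det_fin_two_of]
        field_simp
    _ = r / (2 * D) := by rw [h, mul_div_mul_right _ _ hD]

theorem stmt_10_general (α β lam ν : K)
    (h : 2 * ν ^ 2 = (lam + α) * (lam - α) * (lam + β))
    (γ δ : K) (hγ : γ = β + lam) (hδ : δ = -α ^ 2 + β * lam + lam ^ 2)
    (z : K) (hα : z ≠ α) (hnegα : z ≠ -α) (hβ : z ≠ β) :
    (!![-(z + lam) / (2 * (z + α) * (z - β)),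
        ν / ((z + α) * (z - β)), 0;
        ν / ((z + α) * (z - β)),
        -(z ^ 2 - γ * z + δ) / ((z + α) * (z - β)), 0;
        0, 0, 2 * (z + α) * (z - β) / (z - α)] :
      Matrix (Fin 3) (Fin 3) K).det = 1 := by
  have hr : z - α ≠ 0 := sub_ne_zero.mpr hα
  have hD : (z + α) * (z - β) ≠ 0 :=
    mul_ne_zero (mt eq_neg_of_add_eq_zero_left hnegα) (sub_ne_zero.mpr hβ)
  have hcubic : (z + lam) * (z ^ 2 - γ * z + δ) - 2 * ν ^ 2 = (z - α) * ((z + α) * (z - β)) := by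
    rw [h, hγ, hδ, add_mul_quotient_sub_eq_cubic]
  rw [det_fin_three_of_blockTriangular, mul_assoc 2, det_symm_div_of_mul_sub_eq_mul hD hcubic,
    div_mul_div_cancel₀' hr, div_self (mul_ne_zero two_ne_zero hD)]

end Field

/-- The black ring patching matrix adapted to the top axis rod has unit
determinant. -/
theorem stmt_10 (α β lam ν : ℝ)
    (h : 2 * ν ^ 2 = (lam + α) * (lam - α) * (lam + β))
    (γ δ : ℝ) (hγ : γ = β + lam) (hδ : δ = -α ^ 2 + β * lam + lam ^ 2) :
    ∀ z : ℝ, z ≠ α → z ≠ -α → z ≠ β →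
      (!![-(z + lam) / (2 * (z + α) * (z - β)),
          ν / ((z + α) * (z - β)), 0;
          ν / ((z + α) * (z - β)),
          -(z ^ 2 - γ * z + δ) / ((z + α) * (z - β)), 0;
          0, 0, 2 * (z + α) * (z - β) / (z - α)] :
        Matrix (Fin 3) (Fin 3) ℝ).det = 1 :=
  stmt_10_general α β lam ν h γ δ hγ hδ
end

section
/- Let α, β, L be real numbers with 0 < α ≤ β and L ≠ 0, and define F(a) = a³ + β·a² − α²·a − α²·β − 2L²/π². Then F has exactly one real root A with A > −α, and this root satisfies A > 0. -/
open Real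

/-!
Write `F(a) = (a - α)(a + α)(a + β) - c` with `c = 2L²/π² ≥ 0`. For `a > -α` the last two factors
are positive, so a root of `F` there must satisfy `a ≥ α`. On `[α, ∞)` the product increases
strictly from `0` to `∞`, hence takes the value `c` exactly once.
-/

section OrderedRing

variable {R : Type*} [CommRing R]

lemma cubic_eq_zero_iff_mul_mul_sub_eq (α β c x : R) :
    x ^ 3 + β * x ^ 2 - α ^ 2 * x - α ^ 2 * β - c = 0 ↔ (x - α) * (x - -α) * (x - -β) = c := by
  rw [sub_eq_zero]
  ring_nf

variable [LinearOrder R] [IsStrictOrderedRing R] {p q r x : R}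

lemma strictMonoOn_mul_mul_sub (hq : q ≤ p) (hr : r ≤ p) :
    StrictMonoOn (fun x ↦ (x - p) * (x - q) * (x - r)) (Set.Ici p) := by
  intro x hx y _ hxy
  have hp₀ : 0 ≤ x - p := sub_nonneg.2 hx
  have hq₀ : 0 ≤ x - q := sub_nonneg.2 (hq.trans hx)
  have hr₀ : 0 ≤ x - r := sub_nonneg.2 (hr.trans hx)
  have hpq : (x - p) * (x - q) < (y - p) * (y - q) :=
    mul_lt_mul'' (sub_lt_sub_right hxy p) (sub_lt_sub_right hxy q) hp₀ hq₀
  exact mul_lt_mul'' hpq (sub_lt_sub_right hxy r) (mul_nonneg hp₀ hq₀) hr₀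

lemma le_of_mul_mul_sub_nonneg (hrq : r ≤ q) (hqx : q < x)
    (h : 0 ≤ (x - p) * (x - q) * (x - r)) : p ≤ x := by
  have hpq : 0 ≤ (x - p) * (x - q) := nonneg_of_mul_nonneg_left h (sub_pos.2 (hrq.trans_lt hqx))
  exact sub_nonneg.1 (nonneg_of_mul_nonneg_left hpq (sub_pos.2 hqx))

end OrderedRing

open Filter in
lemma tendsto_mul_mul_sub_atTop (p q r : ℝ) :
    Tendsto (fun x ↦ (x - p) * (x - q) * (x - r)) atTop atTop := by
  have tendsto_sub (a : ℝ) : Tendsto (fun x ↦ x - a) atTop atTop :=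
    tendsto_atTop_add_const_right _ (-a) tendsto_id
  exact ((tendsto_sub p).atTop_mul_atTop₀ (tendsto_sub q)).atTop_mul_atTop₀ (tendsto_sub r)

lemma existsUnique_ge_mul_mul_sub_eq {p q r c : ℝ} (hq : q ≤ p) (hr : r ≤ p) (hc : 0 ≤ c) :
    ∃! x, p ≤ x ∧ (x - p) * (x - q) * (x - r) = c := by
  have hcont : ContinuousOn (fun x ↦ (x - p) * (x - q) * (x - r)) (Set.Ici p) := by fun_prop
  obtain ⟨x, hpx, hx⟩ : c ∈ (fun x ↦ (x - p) * (x - q) * (x - r)) '' Set.Ici p :=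
    isPreconnected_Ici.intermediate_value_Ici Set.self_mem_Ici
      (Filter.le_principal_iff.2 (Filter.Ici_mem_atTop p)) hcont
      (tendsto_mul_mul_sub_atTop p q r) (by simpa using hc)
  refine ⟨x, ⟨hpx, hx⟩, ?_⟩
  rintro y ⟨hpy, hy⟩
  exact (strictMonoOn_mul_mul_sub hq hr).injOn hpy hpx (hy.trans hx.symm)

/-- The cubic F arising in the three-nut black ring reconstruction has exactly
one real root greater than −α, and this root is positive. -/
theorem stmt_11 (α β L : ℝ) (hα : 0 < α) (hαβ : α ≤ β) (hL : L ≠ 0) :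
    ∃ A : ℝ,
      (A ^ 3 + β * A ^ 2 - α ^ 2 * A - α ^ 2 * β - 2 * L ^ 2 / π ^ 2 = 0 ∧
        A > -α ∧ A > 0) ∧
      ∀ A' : ℝ,
        A' ^ 3 + β * A' ^ 2 - α ^ 2 * A' - α ^ 2 * β - 2 * L ^ 2 / π ^ 2 = 0 →
        A' > -α → A' = A := by
  simp only [cubic_eq_zero_iff_mul_mul_sub_eq]
  have hc : 0 ≤ 2 * L ^ 2 / π ^ 2 := by positivity
  obtain ⟨A, ⟨hαA, hA⟩, hA_unique⟩ :=
    existsUnique_ge_mul_mul_sub_eq (p := α) (q := -α) (r := -β) (by linarith) (by linarith) hc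
  refine ⟨A, ⟨hA, by linarith, by linarith⟩, fun A' hA' hαA' ↦ hA_unique A' ⟨?_, hA'⟩⟩
  exact le_of_mul_mul_sub_nonneg (neg_le_neg hαβ) hαA' (hc.trans_eq hA'.symm)
end

section
/- Let b, c, κ be real numbers with 0 < c < 1, 0 < b < 1, κ > 0, and set α = cκ², β = κ², λ = κ²·(2b − bc − c)/(1 − b). Then the non-conicality condition (β + λ)/(β + α) = (β + α)/(β − α) holds if and only if b = 2c/(1 + c²). -/
/-!
Write `C x = (1 + x) / (1 - x)`. Since `β + λ = β (1 - c) C b`, the non-conicality condition reads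
`C b / C c = C c`, that is, `C b = (C c) ^ 2`. As `C (tanh t) = exp (2 * t)`, squaring `C c` doubles
`t`, so the duplication formula for `tanh` gives `(C c) ^ 2 = C (2 * c / (1 + c ^ 2))`, and `C` is
injective away from its pole.
-/

section Cayley

variable {K : Type*} [Field K]

/-- The Cayley transform `x ↦ (1 + x) / (1 - x)`, in which the non-conicality condition becomes
multiplicative. At the pole `x = 1` it takes the value `0`. -/
def cayley (x : K) : K := (1 + x) / (1 - x)

theorem cayley_ne_zero {x : K} (h_pole : x ≠ 1) (h_root : x ≠ -1) : cayley x ≠ 0 :=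
  div_ne_zero (fun h ↦ h_root (eq_neg_of_add_eq_zero_right h)) (sub_ne_zero.2 h_pole.symm)

theorem cayley_injOn [NeZero (2 : K)] : Set.InjOn (cayley : K → K) {1}ᶜ := by
  intro x hx y hy hxy
  have cross : (1 + x) * (1 - y) = (1 + y) * (1 - x) :=
    (div_eq_div_iff (sub_ne_zero.2 (Ne.symm hx)) (sub_ne_zero.2 (Ne.symm hy))).1 hxy
  exact mul_left_cancel₀ (two_ne_zero (α := K)) (by linear_combination cross)

theorem cayley_sq {c : K} (hc : 1 + c ^ 2 ≠ 0) :
    cayley c ^ 2 = cayley (2 * c / (1 + c ^ 2)) := by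
  calc cayley c ^ 2 = (1 + c ^ 2 + 2 * c) / (1 + c ^ 2 - 2 * c) := by
        rw [cayley, div_pow]; ring
    _ = cayley (2 * c / (1 + c ^ 2)) := by
        rw [cayley, one_add_div hc, one_sub_div hc, div_div_div_cancel_right₀ hc]

theorem two_mul_div_one_add_sq_ne_one {c : K} (hc : c ≠ 1) (hc_sq : 1 + c ^ 2 ≠ 0) :
    2 * c / (1 + c ^ 2) ≠ 1 := by
  rw [Ne, div_eq_one_iff_eq hc_sq]
  intro h
  have sq_eq_zero : (c - 1) ^ 2 = 0 := by linear_combination -h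
  exact hc (sub_eq_zero.1 (pow_eq_zero_iff two_ne_zero |>.1 sq_eq_zero))

theorem cayley_eq_cayley_sq_iff [NeZero (2 : K)] {b c : K} (hb : b ≠ 1) (hc : c ≠ 1)
    (hc_sq : 1 + c ^ 2 ≠ 0) : cayley b = cayley c ^ 2 ↔ b = 2 * c / (1 + c ^ 2) := by
  rw [cayley_sq hc_sq]
  exact cayley_injOn.eq_iff hb (two_mul_div_one_add_sq_ne_one hc hc_sq)

theorem add_div_sub_eq_cayley {β : K} (hβ : β ≠ 0) (c : K) :
    (β + c * β) / (β - c * β) = cayley c := by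
  rw [← one_add_mul, ← one_sub_mul, mul_div_mul_right _ _ hβ, cayley]

theorem add_div_add_eq_cayley_div_cayley {b β : K} (hb : b ≠ 1) (hβ : β ≠ 0) (c : K) :
    (β + β * (2 * b - b * c - c) / (1 - b)) / (β + c * β) = cayley b / cayley c := by
  have numerator : β + β * (2 * b - b * c - c) / (1 - b) = cayley b * (1 - c) * β := by
    have : 1 - b ≠ 0 := sub_ne_zero.2 hb.symm
    rw [cayley]
    field_simp
    ring
  rw [numerator, ← one_add_mul, mul_div_mul_right _ _ hβ, cayley.eq_def c, div_div_eq_mul_div]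

end Cayley

theorem stmt_13_general {K : Type*} [Field K] [NeZero (2 : K)] {b c α β lam : K}
    (hb : b ≠ 1) (hc : c ≠ 1) (hc_neg : c ≠ -1) (hc_sq : 1 + c ^ 2 ≠ 0) (hβ : β ≠ 0)
    (hα : α = c * β) (hlam : lam = β * (2 * b - b * c - c) / (1 - b)) :
    (β + lam) / (β + α) = (β + α) / (β - α) ↔ b = 2 * c / (1 + c ^ 2) := by
  rw [hα, hlam, add_div_add_eq_cayley_div_cayley hb hβ, add_div_sub_eq_cayley hβ,
    div_eq_iff (cayley_ne_zero hc hc_neg), ← sq]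
  exact cayley_eq_cayley_sq_iff hb hc hc_sq

/-- Black ring: the non-conicality condition is equivalent to the balance
condition b = 2c/(1+c²). -/
theorem stmt_13 (b c κ : ℝ) (hc0 : 0 < c) (hc1 : c < 1) (hb0 : 0 < b)
    (hb1 : b < 1) (hκ : 0 < κ)
    (α β lam : ℝ) (hα : α = c * κ ^ 2) (hβ : β = κ ^ 2)
    (hlam : lam = κ ^ 2 * (2 * b - b * c - c) / (1 - b)) :
    (β + lam) / (β + α) = (β + α) / (β - α) ↔ b = 2 * c / (1 + c ^ 2) := by
  subst hβ
  exact stmt_13_general hb1.ne hc1.ne (by linarith) (by positivity) (by positivity) hα hlam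
end
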